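/- Let G_τ be a bidirected graph containing no b-circuit. Then the (unique) transitive reduction of the transitive closure Ft(G_τ) equals the (unique) transitive reduction of G_τ: Rt(Ft(G_τ)) = Rt(G_τ). -/

import Mathlib

/-- A signed vertex `x^α` : a vertex together with a sign in `ℤˣ`. -/
abbrev SV (V : Type) := V × ℤˣ

/-- A dart : an ordered signed edge `(x^α, y^β)`, traversed from `x` (entered with
half-edge sign `α`) to `y` (left with half-edge sign `β`). -/
abbrev BDart (V : Type) := SV V × SV V

/-- A bidirected graph on the vertex set `V`, given as its set of (unordered) signed
edges `{x^α, y^β}`; the half-edge of such an edge at `x` has sign `α` and the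
half-edge at `y` has sign `β`. -/
abbrev BGraph (V : Type) := Set (Sym2 (SV V))

/-- `IsWalk G x l y` : the list of darts `l` forms a chain from `x` to `y` in `G`. -/
def IsWalk {V : Type} (G : BGraph V) : V → List (BDart V) → V → Prop
  | x, [], y => x = y
  | x, d :: l, y => d.1.1 = x ∧ Sym2.mk d.1 d.2 ∈ G ∧ IsWalk G d.2.1 l y

/-- `IsBWalk G x α l y β` : `l` is a b-walk from `x^α` to `y^β` : a nonempty chain
from `x` to `y` whose first half-edge sign at `x` is `α`, whose last half-edge sign
at `y` is `β`, and such that at every internal vertex occurrence the two incident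
half-edge signs sum to `0`. -/
def IsBWalk {V : Type} (G : BGraph V) (x : V) (α : ℤˣ) (l : List (BDart V)) (y : V)
    (β : ℤˣ) : Prop :=
  l ≠ [] ∧ IsWalk G x l y ∧ (∀ d ∈ l.head?, d.1.2 = α) ∧ (∀ d ∈ l.getLast?, d.2.2 = β) ∧
    List.Chain' (fun d d' => ((d.2.2 : ℤ) + (d'.1.2 : ℤ) = 0)) l

/-- `IsBPath G x α l y β` : `l` is a b-path from `x^α` to `y^β` : a b-walk from `x^α`
to `y^β` that is minimal, i.e. no proper subsequence of its darts, taken in the same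
order, is a b-walk from `x^α` to `y^β`. -/
def IsBPath {V : Type} (G : BGraph V) (x : V) (α : ℤˣ) (l : List (BDart V)) (y : V)
    (β : ℤˣ) : Prop :=
  IsBWalk G x α l y β ∧ ∀ l', l'.Sublist l → l' ≠ l → ¬ IsBWalk G x α l' y β

/-- The transitive closure `Ft G` : its edges are the edges `{x^α, y^β}` for which
`G` contains a b-path from `x^α` to `y^β`. -/
def Ft {V : Type} (G : BGraph V) : BGraph V :=
  {e | ∃ x α y β l, IsBPath G x α l y β ∧ e = Sym2.mk (x, α) (y, β)}

/-- The transitive closure `ft G H` of the partial graph `H` within `G` : the edges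
of `H` together with every edge `{x^α, y^β}` of `G` for which `H` contains a b-path
from `x^α` to `y^β`. -/
def ft {V : Type} (G H : BGraph V) : BGraph V :=
  H ∪ {e | e ∈ G ∧ ∃ x α y β l, IsBPath H x α l y β ∧ e = Sym2.mk (x, α) (y, β)}

/-- `IsTR G H` : `H` is a transitive reduction of `G` : a partial graph of `G`
minimal with the property `ft G H = G`. -/
def IsTR {V : Type} (G H : BGraph V) : Prop :=
  H ⊆ G ∧ ft G H = G ∧ ∀ H', H' ⊂ H → ft G H' ≠ G

/-- A bidirected graph has no b-circuit if it contains no b-path from `x^α` to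
`x^{-α}` for any vertex `x` and sign `α`. -/
def NoBCircuit {V : Type} (G : BGraph V) : Prop :=
  ¬ ∃ (x : V) (α : ℤˣ) (l : List (BDart V)), IsBPath G x α l x (-α)

/-!
Split every vertex `x` into the two signed vertices `x^+`, `x^-` and read an edge
`{u, v}` of `G` as an arc from `u` to the opposite of `v`. This directed double cover has the
symmetry `u → v ↦ v.opp → u.opp`, its directed paths are the b-walks of `G`, and `G` has no
b-circuit exactly when the double cover is acyclic.

Passing to `Ft G` replaces the arc relation by its transitive closure, so the reachability order is
unchanged. It remains to see that a transitive reduction `H` is determined by that order: its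
arcs are exactly the covering pairs. A covering pair has to be an arc, as a longer path would pass
through an intermediate vertex. Conversely, let `u → v` be an arc of `H` with some `z` strictly
between `u` and `v`. By acyclicity a path from `u` to `z` uses neither `u → v` nor its mirror image
`v.opp → u.opp`, and by symmetry nor does a path from `z` to `v`; so the edge is redundant,
against the minimality of `H`.
-/

open Relation

section Relation

variable {α : Type*} {r s : α → α → Prop} {a b : α}

/-- `b` covers `a` for `r`: they are related and nothing lies between them. This is `CovBy`
for a relation that is not the `<` of an order instance. -/
def IsCover (r : α → α → Prop) (a b : α) : Prop :=
  r a b ∧ ∀ c, r a c → ¬ r c b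

theorem transGen_or_exists_not_of_transGen (h : TransGen r a b) :
    TransGen s a b ∨ ∃ c d, r c d ∧ ¬ s c d ∧ ReflTransGen r a c ∧ ReflTransGen r d b := by
  induction h with
  | @single b hab =>
    by_cases hs : s a b
    · exact .inl (.single hs)
    · exact .inr ⟨a, b, hab, hs, .refl, .refl⟩
  | @tail b b' hab hbb' ih =>
    rcases ih with hab_s | ⟨c, d, hcd, hs, hac, hdb⟩
    · by_cases hs : s b b'
      · exact .inl (hab_s.tail hs)
      · exact .inr ⟨b, b', hbb', hs, hab.to_reflTransGen, .refl⟩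
    · exact .inr ⟨c, d, hcd, hs, hac, hdb.tail hbb'⟩

theorem IsCover.of_transGen (h : IsCover (TransGen r) a b) : r a b := by
  obtain ⟨c, hac, hcb⟩ := TransGen.tail'_iff.1 h.1
  rcases reflTransGen_iff_eq_or_transGen.1 hac with rfl | hac
  · exact hcb
  · exact absurd (.single hcb) (h.2 c hac)

end Relation

section BidirectedGraph

variable {V : Type} {G H : BGraph V} {u v z : SV V}

/-- The signed vertex `x^{-α}` opposite to `x^α`. -/
def SV.opp (u : SV V) : SV V := (u.1, -u.2)

@[simp]
theorem SV.opp_opp (u : SV V) : u.opp.opp = u := by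
  simp [SV.opp]

theorem SV.mk_opp_eq_mk_opp_iff {a b : SV V} :
    s(a, b.opp) = s(u, v.opp) ↔ a = u ∧ b = v ∨ a = v.opp ∧ b = u.opp := by
  have hopp : Function.Involutive (SV.opp (V := V)) := SV.opp_opp
  rw [Sym2.eq_iff, hopp.injective.eq_iff, hopp.eq_iff, eq_comm (a := b) (b := u.opp)]

namespace BGraph

/-- The arc relation of the directed double cover of `G`. The head is negated because a b-walk that
enters a vertex with sign `β` leaves it with sign `-β`. -/
def Arc (G : BGraph V) (u v : SV V) : Prop := s(u, v.opp) ∈ G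

/-- Reachability in the directed double cover of `G` by a path with at least one arc. -/
def Reach (G : BGraph V) : SV V → SV V → Prop := TransGen G.Arc

theorem ext_arc (h : ∀ u v, G.Arc u v ↔ H.Arc u v) : G = H := by
  ext e
  induction e using Sym2.ind with
  | _ u w => simpa only [Arc, SV.opp_opp] using h u w.opp

theorem Arc.opp (h : G.Arc u v) : G.Arc v.opp u.opp := by
  rwa [Arc, SV.opp_opp, Sym2.eq_swap]

theorem Reach.opp (h : G.Reach u v) : G.Reach v.opp u.opp :=
  TransGen.swap _ _ (TransGen.lift SV.opp (fun _ _ => Arc.opp) _ _ h)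

theorem Reach.mono (hGH : G ⊆ H) (h : G.Reach u v) : H.Reach u v :=
  TransGen.mono (fun _ _ hab => hGH hab) _ _ h

end BGraph

open BGraph

section Walk

variable {d d' : BDart V} {l : List (BDart V)}

theorem isBWalk_iff_isChain_eq_neg {x y : V} {α β : ℤˣ} :
    IsBWalk G x α l y β ↔ l ≠ [] ∧ IsWalk G x l y ∧ (∀ d ∈ l.head?, d.1.2 = α) ∧
      (∀ d ∈ l.getLast?, d.2.2 = β) ∧ l.IsChain (fun d d' => d'.1.2 = -d.2.2) := by
  have hsign (ε δ : ℤˣ) : (ε : ℤ) + δ = 0 ↔ δ = -ε := by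
    rw [Units.ext_iff, Units.val_neg, eq_neg_iff_add_eq_zero, add_comm]
  simp only [IsBWalk, hsign]
  rfl

theorem isBWalk_singleton_iff :
    IsBWalk G u.1 u.2 [d] v.1 v.2 ↔ d = (u, v) ∧ G.Arc u v.opp := by
  grind [isBWalk_iff_isChain_eq_neg, IsWalk, Arc, SV.opp_opp, List.isChain_singleton]

theorem isBWalk_cons_cons_iff :
    IsBWalk G u.1 u.2 (d :: d' :: l) v.1 v.2 ↔
      d.1 = u ∧ G.Arc u d.2.opp ∧ IsBWalk G d.2.opp.1 d.2.opp.2 (d' :: l) v.1 v.2 := by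
  simp only [isBWalk_iff_isChain_eq_neg, IsWalk, Arc, SV.opp_opp, List.isChain_cons_cons,
    List.getLast?_cons_cons]
  grind [SV.opp]

theorem exists_isBWalk_iff_reach :
    (∃ l, IsBWalk G u.1 u.2 l v.1 v.2) ↔ G.Reach u v.opp := by
  constructor
  · rintro ⟨l, hl⟩
    induction l generalizing u with
    | nil => exact absurd rfl hl.1
    | cons d l ih =>
      cases l with
      | nil => exact .single (isBWalk_singleton_iff.1 hl).2
      | cons d' l =>
        obtain ⟨-, harc, hl⟩ := isBWalk_cons_cons_iff.1 hl
        exact .head harc (ih hl)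
  · intro h
    induction h using TransGen.head_induction_on with
    | @single u harc => exact ⟨[(u, v)], isBWalk_singleton_iff.2 ⟨rfl, harc⟩⟩
    | @head u w harc _ ih =>
      obtain ⟨_ | ⟨d, l⟩, hl⟩ := ih
      · exact absurd rfl hl.1
      · exact ⟨(u, w.opp) :: d :: l, isBWalk_cons_cons_iff.2 (by simpa using ⟨harc, hl⟩)⟩

theorem exists_isBPath_iff_exists_isBWalk {x y : V} {α β : ℤˣ} :
    (∃ l, IsBPath G x α l y β) ↔ ∃ l, IsBWalk G x α l y β := by
  refine ⟨fun ⟨l, hl⟩ => ⟨l, hl.1⟩, fun hwalk => ?_⟩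
  obtain ⟨l, hl, hmin⟩ := exists_minimalFor_of_wellFoundedLT _ List.length hwalk
  exact ⟨l, hl, fun l' hsub hne hl' => hne (hsub.eq_of_length_le (hmin hl' hsub.length_le))⟩

theorem exists_isBPath_iff_reach :
    (∃ l, IsBPath G u.1 u.2 l v.1 v.2) ↔ G.Reach u v.opp :=
  exists_isBPath_iff_exists_isBWalk.trans exists_isBWalk_iff_reach

theorem exists_isBPath_mk_eq_iff_reach :
    (∃ x α y β l, IsBPath G x α l y β ∧ s(u, v.opp) = s((x, α), (y, β))) ↔ G.Reach u v := by
  constructor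
  · rintro ⟨x, α, y, β, l, hl, he⟩
    have hreach : G.Reach (x, α) (SV.opp (y, β)) := exists_isBPath_iff_reach.1 ⟨l, hl⟩
    rw [← SV.opp_opp (y, β), SV.mk_opp_eq_mk_opp_iff] at he
    rcases he with ⟨rfl, rfl⟩ | ⟨rfl, rfl⟩
    · exact hreach
    · simpa only [SV.opp_opp] using hreach.opp
  · intro h
    obtain ⟨l, hl⟩ := exists_isBPath_iff_reach.2 (v.opp_opp.symm ▸ h)
    exact ⟨_, _, _, _, l, hl, rfl⟩

theorem noBCircuit_iff_not_reach_self : NoBCircuit G ↔ ∀ u, ¬ G.Reach u u := by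
  have hcircuit (x : V) (α : ℤˣ) :
      (∃ l, IsBPath G x α l x (-α)) ↔ G.Reach (x, α) (x, α) := by
    simpa [SV.opp] using exists_isBPath_iff_reach (G := G) (u := (x, α)) (v := (x, -α))
  simp only [NoBCircuit, hcircuit, not_exists, Prod.forall]

end Walk

theorem reach_Ft : (Ft G).Reach = G.Reach := by
  have harc : (Ft G).Arc = G.Reach := by
    ext u v
    exact exists_isBPath_mk_eq_iff_reach
  rw [Reach, harc, Reach, transGen_eq_self]

theorem noBCircuit_Ft_iff : NoBCircuit (Ft G) ↔ NoBCircuit G := by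
  simp only [noBCircuit_iff_not_reach_self, reach_Ft]

theorem arc_ft_iff : (ft G H).Arc u v ↔ H.Arc u v ∨ G.Arc u v ∧ H.Reach u v :=
  or_congr_right (and_congr_right' exists_isBPath_mk_eq_iff_reach)

theorem ft_eq_iff_reach_eq (hHG : H ⊆ G) : ft G H = G ↔ H.Reach = G.Reach := by
  constructor
  · intro hft
    have harc : G.Arc ≤ H.Reach := fun u v huv => by
      rw [← hft, arc_ft_iff] at huv
      exact huv.elim .single And.right
    exact le_antisymm (fun _ _ => Reach.mono hHG) (TransGen.closed harc)
  · intro hreach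
    refine ext_arc fun u v => arc_ft_iff.trans ⟨?_, fun huv => .inr ⟨huv, ?_⟩⟩
    · rintro (huv | huv)
      exacts [hHG huv, huv.1]
    · exact hreach ▸ .single huv

theorem reach_sdiff_singleton_of_reach (hH : NoBCircuit H) (huz : H.Reach u z) (hzv : H.Reach z v) :
    Reach (H \ {s(u, v.opp)}) u z := by
  rw [noBCircuit_iff_not_reach_self] at hH
  rcases transGen_or_exists_not_of_transGen (s := Arc (H \ {s(u, v.opp)})) huz with
    h | ⟨c, d, hcd, hdel, huc, hdz⟩
  · exact h
  have hedge : s(c, d.opp) = s(u, v.opp) := by_contra fun hne => hdel ⟨hcd, hne⟩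
  have hdv : H.Reach d v := .trans_right hdz hzv
  rcases SV.mk_opp_eq_mk_opp_iff.1 hedge with ⟨-, rfl⟩ | ⟨rfl, rfl⟩
  · exact absurd hdv (hH d)
  · have hvu : H.Reach v.opp u := by simpa only [SV.opp_opp] using hdv.opp
    exact absurd (hvu.trans_left huc) (hH v.opp)

namespace IsTR

theorem not_reach_sdiff_singleton (hH : IsTR G H) (huv : H.Arc u v) :
    ¬ Reach (H \ {s(u, v.opp)}) u v := by
  obtain ⟨hHG, hft, hmin⟩ := hH
  intro hsdiff
  have hsub : H \ {s(u, v.opp)} ⊂ H := Set.sdiff_singleton_ssubset.2 huv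
  have harc : H.Arc ≤ Reach (H \ {s(u, v.opp)}) := fun a b hab => by
    by_cases he : s(a, b.opp) = s(u, v.opp)
    · rcases SV.mk_opp_eq_mk_opp_iff.1 he with ⟨rfl, rfl⟩ | ⟨rfl, rfl⟩
      exacts [hsdiff, hsdiff.opp]
    · exact .single ⟨hab, he⟩
  have hreach : Reach (H \ {s(u, v.opp)}) = H.Reach :=
    le_antisymm (fun _ _ => Reach.mono hsub.subset) (TransGen.closed harc)
  exact hmin _ hsub <| (ft_eq_iff_reach_eq (hsub.subset.trans hHG)).2 <|
    hreach.trans ((ft_eq_iff_reach_eq hHG).1 hft)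

theorem arc_iff_isCover (hH : IsTR G H) (hG : NoBCircuit G) :
    H.Arc u v ↔ IsCover G.Reach u v := by
  have hreach : H.Reach = G.Reach := (ft_eq_iff_reach_eq hH.1).1 hH.2.1
  have hacyclic : NoBCircuit H := by
    rwa [noBCircuit_iff_not_reach_self, hreach, ← noBCircuit_iff_not_reach_self]
  rw [← hreach]
  refine ⟨fun huv => ⟨.single huv, fun z huz hzv => ?_⟩, IsCover.of_transGen⟩
  have huz' : Reach (H \ {s(u, v.opp)}) u z := reach_sdiff_singleton_of_reach hacyclic huz hzv
  have hzv' : Reach (H \ {s(u, v.opp)}) z v := by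
    simpa [Sym2.eq_swap] using (reach_sdiff_singleton_of_reach hacyclic hzv.opp huz.opp).opp
  exact hH.not_reach_sdiff_singleton huv (huz'.trans hzv')

end IsTR

end BidirectedGraph

theorem stmt18_general {V : Type} (G : BGraph V) (h : NoBCircuit G) :
    ∀ H K, IsTR (Ft G) H → IsTR G K → H = K := by
  intro H K hH hK
  refine BGraph.ext_arc fun u v => ?_
  rw [hH.arc_iff_isCover (noBCircuit_Ft_iff.2 h), hK.arc_iff_isCover h, reach_Ft]

/-- If a bidirected graph `G` contains no b-circuit, then the
(unique) transitive reduction of `Ft G` equals the (unique) transitive reduction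
of `G`. -/
theorem stmt18 {V : Type} [Fintype V] (G : BGraph V) (h : NoBCircuit G) :
    ∀ H K, IsTR (Ft G) H → IsTR G K → H = K :=
  stmt18_general G h
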